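/- Let G = A *_C B be the free product of groups A and B amalgamated over a common subgroup C, let a ∈ A be a nontrivial element with CaC ≠ Ca⁻¹C, let b ∈ B \ C, and let Δ: G → ℝ be defined from a-segments in special forms. For n ≥ 1, let g_n = (ba)(ba⁻¹)(ba)(ba⁻¹)²(ba)⋯(ba)(ba⁻¹)^{n−1}(ba)(ba⁻¹)^n(ba), i.e. g_n is the product, for i = 0,1,…,n in order, of the blocks (ba)(ba⁻¹)^i, followed by a final (ba). Then Δ(g_n) ≥ n − 1; in particular Δ is unbounded on G. -/

import Mathlib

/-!
The word `W = b a^{ε₀} b a^{ε₁} ⋯` with `ε_q = 1` exactly when `q` is a triangular number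
represents `gₙ` once it is cut after the syllable pair with index `q = tri (n + 1)`
(`word_prod`). It is alternating and special, because `CaC ≠ Ca⁻¹C` forces `a ∉ C` and keeps the
two double cosets disjoint.

`Δ(gₙ)` is computed from an arbitrarily chosen special form, so the counts have to be shown
independent of the choice. The amalgam maps to Mathlib's `Monoid.PushoutI`, whose normal form
theorem gives that a nonempty alternating word never represents an element of `C`
(`Alt.eq_nil`). Comparing two alternating words from the front, this forces corresponding
syllables to lie in the same double coset of `C` (`Alt.forall₂`). In special sequences the
syllables in `C a^{±1} C` are the letters `a^{±1}` themselves, so these letters occupy the same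
positions in every special form, and the segment counts agree with those of `W`.

In `W` the gap between consecutive triangular numbers `tri (k - 1)` and `tri k` is `k`, so there
is exactly one `a`-segment of length `2k - 1` for each `1 ≤ k ≤ n + 1` (`segAt_word_iff`). An
`a⁻¹`-segment of length `2k - 1` with `k ≥ 3` would require two consecutive positive triangular
numbers at distance one, and there are none (`not_segAt_word_inv`). Hence `r_k = 1` for
`3 ≤ k ≤ n + 1`, and these `n - 1` terms bound `Δ(gₙ)` from below.
-/


open Monoid

open scoped Classical

namespace PalAmalg

variable {A B C : Type*} [Group A] [Group B] [Group C]
variable (i : C →* A) (j : C →* B)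

/-- The free product of `A` and `B` amalgamated over `C` (embedded in `A` via `i` and in `B`
via `j`): the quotient of the free product `A ∗ B` by the normal subgroup generated by the
elements `i c * (j c)⁻¹`, `c ∈ C`. -/
abbrev Amalg : Type _ :=
  Coprod A B ⧸ Subgroup.normalClosure
    {x : Coprod A B | ∃ c : C, x = Coprod.inl (i c) * (Coprod.inr (j c))⁻¹}

/-- The canonical map of the factor `A` into the amalgam. -/
def ofA : A →* Amalg i j := (QuotientGroup.mk' _).comp Coprod.inl

/-- The canonical map of the factor `B` into the amalgam. -/
def ofB : B →* Amalg i j := (QuotientGroup.mk' _).comp Coprod.inr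

/-- The image of the factor `A` in the amalgam. -/
def AG : Set (Amalg i j) := Set.range (ofA i j)

/-- The image of the factor `B` in the amalgam. -/
def BG : Set (Amalg i j) := Set.range (ofB i j)

/-- The image of the amalgamated subgroup `C` in the amalgam. -/
def CG : Set (Amalg i j) := Set.range ((ofA i j).comp i)

/-- The double coset `C v C` in the amalgam. -/
def DCoset (v : Amalg i j) : Set (Amalg i j) :=
  {x | ∃ c1 ∈ CG i j, ∃ c2 ∈ CG i j, x = c1 * v * c2}

/-- A sequence `x₁, …, xₙ` of elements of the amalgam is reduced if every `xᵢ` lies in one of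
the factors, successive `xᵢ, xᵢ₊₁` lie in different factors, no `xᵢ` lies in `C` when `n > 1`,
and `x₁ ≠ 1` when `n = 1`. -/
def Reduced (l : List (Amalg i j)) : Prop :=
  (∀ x ∈ l, x ∈ AG i j ∪ BG i j) ∧
  List.Chain' (fun x y => ¬(x ∈ AG i j ∧ y ∈ AG i j) ∧ ¬(x ∈ BG i j ∧ y ∈ BG i j)) l ∧
  (1 < l.length → ∀ x ∈ l, x ∉ CG i j) ∧
  (l.length = 1 → ∀ x ∈ l, x ≠ 1)

/-- `g` is a group-palindrome if it has a reduced expression `x₁ ⋯ xₙ` whose reverse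
`xₙ ⋯ x₁` represents the same element of the amalgam. -/
def GroupPalindrome (g : Amalg i j) : Prop :=
  ∃ l : List (Amalg i j), Reduced i j l ∧ l.prod = g ∧ l.reverse.prod = g

/-- A special sequence (with respect to a fixed `a ∈ A`): an alternating sequence of elements
of the factors in which every syllable lying in the double coset `C a C` is the letter `a`
itself, and every syllable lying in `C a⁻¹ C` is the letter `a⁻¹` itself. -/
def IsSpecialSeq (a : A) (l : List (Amalg i j)) : Prop :=
  (∀ x ∈ l, x ∈ AG i j ∪ BG i j) ∧
  List.Chain' (fun x y => ¬(x ∈ AG i j ∧ y ∈ AG i j) ∧ ¬(x ∈ BG i j ∧ y ∈ BG i j)) l ∧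
  (1 < l.length → ∀ x ∈ l, x ∉ CG i j) ∧
  (∀ x ∈ l, x ∈ DCoset i j (ofA i j a) → x = ofA i j a) ∧
  (∀ x ∈ l, x ∈ DCoset i j (ofA i j a)⁻¹ → x = (ofA i j a)⁻¹)

/-- `l` is a special form of `g`: up to boundary elements `u, u'` of `C` (which arise when the
first or last syllable is replaced by `a^{±1}`), the special sequence `l` represents `g`. -/
def IsSpecialForm (a : A) (g : Amalg i j) (l : List (Amalg i j)) : Prop :=
  IsSpecialSeq i j a l ∧ ∃ u ∈ CG i j, ∃ u' ∈ CG i j, u * l.prod * u' = g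

/-- A chosen special form of `g`. -/
noncomputable def spform (a : A) (g : Amalg i j) : List (Amalg i j) :=
  if h : ∃ l : List (Amalg i j), IsSpecialForm i j a g l then Classical.choose h else []

/-- The number of `v`-segments of length `2k-1` in the list `l`: subwords
`v x₁ ⋯ x_{2k-1} v` with no `x_t = v`. -/
noncomputable def segCount (v : Amalg i j) (k : ℕ) (l : List (Amalg i j)) : ℕ :=
  ((Finset.range (l.length + 1)).filter fun s => ∃ l₁ m l₂ : List (Amalg i j),
    l = l₁ ++ [v] ++ m ++ [v] ++ l₂ ∧ l₁.length = s ∧ m.length = 2 * k - 1 ∧ v ∉ m).card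

/-- `p_k(g)`: the number of `a`-segments of length `2k-1` in the special form of `g`. -/
noncomputable def pk (a : A) (k : ℕ) (g : Amalg i j) : ℕ :=
  segCount i j (ofA i j a) k (spform i j a g)

/-- `m_k(g)`: the number of `a⁻¹`-segments of length `2k-1` in the special form of `g`. -/
noncomputable def mk (a : A) (k : ℕ) (g : Amalg i j) : ℕ :=
  segCount i j (ofA i j a)⁻¹ k (spform i j a g)

/-- `d_k = p_k - m_k`. -/
noncomputable def dk (a : A) (k : ℕ) (g : Amalg i j) : ℤ :=
  (pk i j a k g : ℤ) - (mk i j a k g : ℤ)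

/-- `r_k ∈ {0,1}`: the remainder of `d_k` modulo 2. -/
noncomputable def rk (a : A) (k : ℕ) (g : Amalg i j) : ℤ := dk i j a k g % 2

/-- The quasi-homomorphism `Δ(g) = Σ_{k ≥ 1} r_k(g)` (a finite sum, since `r_k = 0` for `k`
larger than the length of the special form). -/
noncomputable def Delta (a : A) (g : Amalg i j) : ℝ :=
  ∑ k ∈ Finset.Icc 1 (spform i j a g).length, (rk i j a k g : ℝ)


/-! ### Comparison with Mathlib's pushout of groups -/

universe u v

/-- The two factors `A` and `B` as a family indexed by `Bool`, lifted to a common universe. -/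
def Fac (A : Type u) (B : Type v) : Bool → Type (max u v)
  | true => ULift.{v} A
  | false => ULift.{u} B

instance facGroup : ∀ t, Group (Fac A B t)
  | true => inferInstanceAs (Group (ULift A))
  | false => inferInstanceAs (Group (ULift B))

/-- The lift `A → Fac A B true`, as a homomorphism. -/
def upA : A →* Fac A B true := (MulEquiv.ulift (α := A)).symm.toMonoidHom

/-- The lift `B → Fac A B false`, as a homomorphism. -/
def upB : B →* Fac A B false := (MulEquiv.ulift (α := B)).symm.toMonoidHom

lemma upA_injective : Function.Injective (upA : A →* Fac A B true) :=
  (MulEquiv.ulift (α := A)).symm.injective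

lemma upB_injective : Function.Injective (upB : B →* Fac A B false) :=
  (MulEquiv.ulift (α := B)).symm.injective

/-- The embeddings `i` and `j` as a family indexed by `Bool`. -/
def facMap : ∀ t, C →* Fac A B t
  | true => upA.comp i
  | false => upB.comp j

lemma facMap_injective (hi : Function.Injective i) (hj : Function.Injective j) :
    ∀ t, Function.Injective (facMap i j t)
  | true => by
    simpa [facMap] using upA_injective.comp hi
  | false => by
    simpa [facMap] using upB_injective.comp hj

/-- The comparison homomorphism from the amalgam to Mathlib's pushout. -/
def toPush : Amalg i j →* PushoutI (facMap i j) :=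
  QuotientGroup.lift _
    (Coprod.lift ((PushoutI.of true).comp upA) ((PushoutI.of false).comp upB)) <| by
      refine Subgroup.normalClosure_le_normal ?_
      rintro x ⟨c, rfl⟩
      have h1 := PushoutI.of_apply_eq_base (facMap i j) true c
      have h2 := PushoutI.of_apply_eq_base (facMap i j) false c
      simp only [SetLike.mem_coe, MonoidHom.mem_ker, map_mul, map_inv, Coprod.lift_apply_inl,
        Coprod.lift_apply_inr, MonoidHom.comp_apply]
      rw [mul_inv_eq_one]
      exact h1.trans h2.symm

lemma toPush_ofA (x : A) : toPush i j (ofA i j x) = PushoutI.of true (upA x) := by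
  simp [toPush, ofA]

lemma toPush_ofB (x : B) : toPush i j (ofB i j x) = PushoutI.of false (upB x) := by
  simp [toPush, ofB]

lemma ofA_eq_ofB (c : C) : ofA i j (i c) = ofB i j (j c) := by
  rw [← mul_inv_eq_one, ← map_inv]
  simp only [ofA, ofB, MonoidHom.comp_apply, ← map_mul]
  rw [QuotientGroup.mk'_apply, QuotientGroup.eq_one_iff]
  exact Subgroup.subset_normalClosure ⟨c, by simp⟩

lemma toPush_C {x : Amalg i j} (hx : x ∈ CG i j) :
    toPush i j x ∈ (PushoutI.base (facMap i j)).range := by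
  obtain ⟨c, rfl⟩ := hx
  exact ⟨c, by rw [← PushoutI.of_apply_eq_base (facMap i j) true c]; exact (toPush_ofA i j _).symm⟩

lemma mem_range_of_ofA (hi : Function.Injective i) (hj : Function.Injective j) {x : A}
    (h : toPush i j (ofA i j x) ∈ (PushoutI.base (facMap i j)).range) : x ∈ i.range := by
  obtain ⟨c, hc⟩ := h
  rw [toPush_ofA, ← PushoutI.of_apply_eq_base (facMap i j) true c] at hc
  exact ⟨c, upA_injective (PushoutI.of_injective (facMap_injective i j hi hj) true hc)⟩

lemma mem_range_of_ofB (hi : Function.Injective i) (hj : Function.Injective j) {x : B}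
    (h : toPush i j (ofB i j x) ∈ (PushoutI.base (facMap i j)).range) : x ∈ j.range := by
  obtain ⟨c, hc⟩ := h
  rw [toPush_ofB, ← PushoutI.of_apply_eq_base (facMap i j) false c] at hc
  exact ⟨c, upB_injective (PushoutI.of_injective (facMap_injective i j hi hj) false hc)⟩

lemma ofA_mem_CG {x : A} (h : x ∈ i.range) : ofA i j x ∈ CG i j := by
  obtain ⟨c, rfl⟩ := h
  exact ⟨c, rfl⟩

lemma ofB_mem_CG {x : B} (h : x ∈ j.range) : ofB i j x ∈ CG i j := by
  obtain ⟨c, rfl⟩ := h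
  exact ⟨c, ofA_eq_ofB i j c⟩

/-- The images of the two factors meet exactly in the image of `C`. -/
lemma mem_CG_of_mem (hi : Function.Injective i) (hj : Function.Injective j) {x : Amalg i j}
    (h1 : x ∈ AG i j) (h2 : x ∈ BG i j) : x ∈ CG i j := by
  obtain ⟨y, rfl⟩ := h1
  obtain ⟨z, hz⟩ := h2
  refine ofA_mem_CG i j (mem_range_of_ofA i j hi hj ?_)
  rw [← PushoutI.inf_of_range_eq_base_range (facMap_injective i j hi hj)
    (i := true) (j := false) (by simp)]
  refine ⟨⟨upA y, (toPush_ofA i j y).symm⟩, upB z, ?_⟩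
  rw [← hz, toPush_ofB]

/-- Every syllable outside `C` comes from a letter outside the base group in the factor
indexed by `x ∈ AG`. -/
lemma exists_letter (x : Amalg i j) (h1 : x ∈ AG i j ∪ BG i j) (h2 : x ∉ CG i j) :
    ∃ s : Σ t, Fac A B t, s.2 ∉ (facMap i j s.1).range ∧ (s.1 = true ↔ x ∈ AG i j) ∧
      PushoutI.of s.1 s.2 = toPush i j x := by
  by_cases hA : x ∈ AG i j
  · obtain ⟨y, rfl⟩ := id hA
    refine ⟨⟨true, upA y⟩, ?_, by simpa using hA, (toPush_ofA i j y).symm⟩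
    rintro ⟨c, hc⟩
    exact h2 (ofA_mem_CG i j ⟨c, upA_injective hc⟩)
  · obtain ⟨y, rfl⟩ := h1.resolve_left hA
    refine ⟨⟨false, upB y⟩, ?_, by simpa using hA, (toPush_ofB i j y).symm⟩
    rintro ⟨c, hc⟩
    exact h2 (ofB_mem_CG i j ⟨c, upB_injective hc⟩)

/-! ### Alternating words and uniqueness of their double cosets -/

/-- An alternating word: all syllables lie in the factors but not in `C`, and consecutive ones
lie in different factors. Since the factors meet in `C`, the factor of a syllable is recorded by
whether it lies in `AG`. -/
def Alt (l : List (Amalg i j)) : Prop :=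
  (∀ x ∈ l, x ∈ AG i j ∪ BG i j ∧ x ∉ CG i j) ∧
    l.IsChain (fun x y => ¬ (x ∈ AG i j ↔ y ∈ AG i j))

/-- The normal form theorem: a nonempty alternating word does not represent an element of `C`. -/
lemma Alt.eq_nil (hi : Function.Injective i) (hj : Function.Injective j) {l : List (Amalg i j)}
    (hl : Alt i j l) (h : l.prod ∈ CG i j) : l = [] := by
  have hex : ∀ x : Amalg i j, ∃ s : Σ t, Fac A B t, x ∈ AG i j ∪ BG i j ∧ x ∉ CG i j →
      s.2 ∉ (facMap i j s.1).range ∧ (s.1 = true ↔ x ∈ AG i j) ∧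
      PushoutI.of s.1 s.2 = toPush i j x := by
    intro x
    by_cases hx : x ∈ AG i j ∪ BG i j ∧ x ∉ CG i j
    · obtain ⟨s, hs⟩ := exists_letter i j x hx.1 hx.2
      exact ⟨s, fun _ => hs⟩
    · exact ⟨⟨true, 1⟩, fun h => absurd h hx⟩
  choose f hf using hex
  let w : CoprodI.Word (Fac A B) :=
    { toList := l.map f
      ne_one := by
        intro s hs
        obtain ⟨x, hx, rfl⟩ := List.mem_map.1 hs
        intro h1
        exact (hf x (hl.1 x hx)).1 (h1 ▸ one_mem _)
      chain_ne := by
        rw [List.isChain_map]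
        refine List.IsChain.imp_of_mem_imp ?_ hl.2
        intro x y hx hy hxy heq
        apply hxy
        rw [← (hf x (hl.1 x hx)).2.1, ← (hf y (hl.1 y hy)).2.1, heq] }
  have hw : PushoutI.Reduced (facMap i j) w := by
    intro s hs
    obtain ⟨x, hx, rfl⟩ := List.mem_map.1 hs
    exact (hf x (hl.1 x hx)).1
  have hp : PushoutI.ofCoprodI w.prod = toPush i j l.prod := by
    simp only [CoprodI.Word.prod, map_list_prod, List.map_map, w]
    congr 1
    refine List.map_congr_left fun x hx => ?_
    simpa using (hf x (hl.1 x hx)).2.2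
  have := hw.eq_empty_of_mem_range (facMap_injective i j hi hj) (hp ▸ toPush_C i j h)
  have h2 : l.map f = [] := congrArg CoprodI.Word.toList this
  simpa using h2

lemma CG_mul {x y : Amalg i j} (hx : x ∈ CG i j) (hy : y ∈ CG i j) : x * y ∈ CG i j :=
  mul_mem (S := Subgroup (Amalg i j)) (s := ((ofA i j).comp i).range) hx hy

lemma CG_inv {x : Amalg i j} (hx : x ∈ CG i j) : x⁻¹ ∈ CG i j :=
  inv_mem (S := Subgroup (Amalg i j)) (s := ((ofA i j).comp i).range) hx

lemma CG_inv_iff {x : Amalg i j} : x⁻¹ ∈ CG i j ↔ x ∈ CG i j :=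
  inv_mem_iff (S := Subgroup (Amalg i j)) (H := ((ofA i j).comp i).range)

lemma CG_one : (1 : Amalg i j) ∈ CG i j := ⟨1, by simp⟩

lemma AG_mul {x y : Amalg i j} (hx : x ∈ AG i j) (hy : y ∈ AG i j) : x * y ∈ AG i j :=
  mul_mem (S := Subgroup (Amalg i j)) (s := (ofA i j).range) hx hy

lemma AG_inv_iff {x : Amalg i j} : x⁻¹ ∈ AG i j ↔ x ∈ AG i j :=
  inv_mem_iff (S := Subgroup (Amalg i j)) (H := (ofA i j).range)

lemma BG_mul {x y : Amalg i j} (hx : x ∈ BG i j) (hy : y ∈ BG i j) : x * y ∈ BG i j :=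
  mul_mem (S := Subgroup (Amalg i j)) (s := (ofB i j).range) hx hy

lemma BG_inv_iff {x : Amalg i j} : x⁻¹ ∈ BG i j ↔ x ∈ BG i j :=
  inv_mem_iff (S := Subgroup (Amalg i j)) (H := (ofB i j).range)

lemma CG_sub_AG {x : Amalg i j} (hx : x ∈ CG i j) : x ∈ AG i j := by
  obtain ⟨c, rfl⟩ := hx
  exact ⟨i c, rfl⟩

lemma CG_sub_BG {x : Amalg i j} (hx : x ∈ CG i j) : x ∈ BG i j := by
  obtain ⟨c, rfl⟩ := hx
  exact ⟨j c, (ofA_eq_ofB i j c).symm⟩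

lemma Alt.tail {x : Amalg i j} {l : List (Amalg i j)} (h : Alt i j (x :: l)) : Alt i j l :=
  ⟨fun y hy => h.1 y (List.mem_cons_of_mem _ hy), h.2.tail⟩

/-- Joining the formal inverse of `y :: L` to `x :: l` through a syllable `z` that replaces both
`y⁻¹` and `x` gives an alternating word. -/
lemma Alt.join {x y z : Amalg i j} {l L : List (Amalg i j)} (hl : Alt i j (x :: l))
    (hL : Alt i j (y :: L)) (hz : z ∈ AG i j ∪ BG i j) (hzC : z ∉ CG i j)
    (hzx : z ∈ AG i j ↔ x ∈ AG i j) (hzy : z ∈ AG i j ↔ y ∈ AG i j) :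
    Alt i j ((L.map (·⁻¹)).reverse ++ z :: l) := by
  constructor
  · intro w hw
    simp only [List.mem_append, List.mem_reverse, List.mem_map, List.mem_cons] at hw
    rcases hw with ⟨v, hv, rfl⟩ | rfl | hw
    · have := hL.1 v (List.mem_cons_of_mem _ hv)
      rw [CG_inv_iff, Set.mem_union, AG_inv_iff, BG_inv_iff]
      exact this
    · exact ⟨hz, hzC⟩
    · exact hl.1 w (List.mem_cons_of_mem _ hw)
  · rw [List.isChain_split, ← List.reverse_cons, List.isChain_reverse]
    constructor
    · have h := hL.2
      rw [List.isChain_cons_iff] at h ⊢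
      rcases h with h | ⟨v, L', h1, h2, rfl⟩
      · left; simp [h]
      · right
        refine ⟨v⁻¹, L'.map (·⁻¹), ?_, ?_, by simp⟩
        · rw [AG_inv_iff, hzy]
          tauto
        · rw [← List.map_cons (f := fun x : Amalg i j => x⁻¹), List.isChain_map]
          refine List.IsChain.imp ?_ h2
          intro p q hpq
          rw [AG_inv_iff, AG_inv_iff]
          tauto
    · have h := hl.2
      rw [List.isChain_cons_iff] at h ⊢
      rcases h with h | ⟨v, L', h1, h2, rfl⟩
      · left; simp [h]
      · right
        exact ⟨v, L', by rw [hzx]; exact h1, h2, rfl⟩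

/-- Two alternating words that represent the same element up to factors from `C` on both sides
have the same length, and corresponding syllables lie in the same double coset of `C`. -/
lemma Alt.forall₂ (hi : Function.Injective i) (hj : Function.Injective j)
    {l L : List (Amalg i j)} (hl : Alt i j l) (hL : Alt i j L) {u u' : Amalg i j}
    (hu : u ∈ CG i j) (hu' : u' ∈ CG i j) (h : u * l.prod * u' = L.prod) :
    List.Forall₂ (fun x y => x ∈ DCoset i j y) l L := by
  induction l generalizing L u with
  | nil =>
    have : L = [] := hL.eq_nil i j hi hj (by
      rw [← h]; simpa using CG_mul i j hu hu')
    subst this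
    exact List.Forall₂.nil
  | cons x l ih =>
    cases L with
    | nil =>
      have h1 : (x :: l).prod = u⁻¹ * u'⁻¹ := by
        rw [List.prod_nil] at h
        rw [eq_mul_inv_iff_mul_eq, ← mul_one u⁻¹, ← h]
        group
      have := hl.eq_nil i j hi hj (h1 ▸ CG_mul i j (CG_inv i j hu) (CG_inv i j hu'))
      simp at this
    | cons y L =>
      have hx := hl.1 x (by simp)
      have hy := hL.1 y (by simp)
      have hrest : (y⁻¹ * u * x) * l.prod * u' = L.prod := by
        rw [List.prod_cons, List.prod_cons] at h
        rw [eq_inv_mul_of_mul_eq h.symm]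
        group
      by_cases hc : y⁻¹ * u * x ∈ CG i j
      · refine List.Forall₂.cons ?_ (ih hl.tail hL.tail hc hrest)
        exact ⟨u⁻¹, CG_inv i j hu, _, hc, by group⟩
      · exfalso
        have hprod : (L.map (·⁻¹)).reverse.prod * ((y⁻¹ * u * x) * l.prod) ∈ CG i j := by
          rw [← List.prod_inv_reverse, ← hrest]
          convert CG_inv i j hu' using 1
          group
        by_cases hxy : x ∈ AG i j ↔ y ∈ AG i j
        · have hz : y⁻¹ * u * x ∈ AG i j ∪ BG i j ∧ (y⁻¹ * u * x ∈ AG i j ↔ x ∈ AG i j) := by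
            by_cases hxA : x ∈ AG i j
            · have : y⁻¹ * u * x ∈ AG i j :=
                AG_mul i j (AG_mul i j ((AG_inv_iff i j).2 (hxy.1 hxA)) (CG_sub_AG i j hu)) hxA
              exact ⟨Or.inl this, by tauto⟩
            · have : y⁻¹ * u * x ∈ BG i j :=
                BG_mul i j (BG_mul i j ((BG_inv_iff i j).2 (hy.1.resolve_left (by tauto)))
                  (CG_sub_BG i j hu)) (hx.1.resolve_left hxA)
              exact ⟨Or.inr this, fun h => absurd (mem_CG_of_mem i j hi hj h this) hc,
                fun h => absurd h hxA⟩
          have := (hl.join i j hL hz.1 hc hz.2 (hz.2.trans hxy)).eq_nil i j hi hj (by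
            rw [List.prod_append, List.prod_cons]; exact hprod)
          simp at this
        · have hzC : y⁻¹ * u ∉ CG i j := by
            intro hh
            have := CG_mul i j hh (CG_inv i j hu)
            rw [mul_inv_cancel_right, CG_inv_iff] at this
            exact hy.2 this
          have hz : y⁻¹ * u ∈ AG i j ∪ BG i j ∧ (y⁻¹ * u ∈ AG i j ↔ y ∈ AG i j) := by
            by_cases hyA : y ∈ AG i j
            · have : y⁻¹ * u ∈ AG i j :=
                AG_mul i j ((AG_inv_iff i j).2 hyA) (CG_sub_AG i j hu)
              exact ⟨Or.inl this, by tauto⟩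
            · have : y⁻¹ * u ∈ BG i j :=
                BG_mul i j ((BG_inv_iff i j).2 (hy.1.resolve_left hyA)) (CG_sub_BG i j hu)
              exact ⟨Or.inr this, fun h => absurd (mem_CG_of_mem i j hi hj h this) hzC,
                fun h => absurd h hyA⟩
          have hl' : Alt i j (y⁻¹ * u :: x :: l) := by
            refine ⟨?_, ?_⟩
            · intro w hw
              rcases List.mem_cons.1 hw with rfl | hw
              · exact ⟨hz.1, hzC⟩
              · exact hl.1 w hw
            · rw [List.isChain_cons_cons]
              exact ⟨by tauto, hl.2⟩
          have := (hl'.join i j hL hz.1 hzC Iff.rfl hz.2).eq_nil i j hi hj (by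
            rw [List.prod_append, List.prod_cons, List.prod_cons]
            simpa [mul_assoc] using hprod)
          simp at this

/-! ### Segments in terms of positions -/

/-- A `v`-segment of length `2k-1` starts at position `s` of `l`. -/
def SegAt {α : Type*} (v : α) (k : ℕ) (l : List α) (s : ℕ) : Prop :=
  l[s]? = some v ∧ l[s + 2 * k]? = some v ∧ ∀ t, 0 < t → t < 2 * k → l[s + t]? ≠ some v

lemma segAt_iff {α : Type*} (v : α) {k : ℕ} (hk : 1 ≤ k) (l : List α) (s : ℕ) :
    (∃ l₁ m l₂ : List α, l = l₁ ++ [v] ++ m ++ [v] ++ l₂ ∧ l₁.length = s ∧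
      m.length = 2 * k - 1 ∧ v ∉ m) ↔ SegAt v k l s := by
  constructor
  · rintro ⟨l₁, m, l₂, rfl, rfl, hm, hv⟩
    refine ⟨by simp, ?_, ?_⟩
    · have : l₁.length + 2 * k = (l₁ ++ [v] ++ m).length := by simp; omega
      rw [this, List.append_assoc, List.getElem?_append_right le_rfl]
      simp
    · intro t h0 h1 h
      rw [List.append_assoc, List.getElem?_append_left (by simp; omega),
        List.getElem?_append_right (by simp; omega)] at h
      exact hv (List.mem_of_getElem? h)
  · rintro ⟨h1, h2, h3⟩
    obtain ⟨hs1, e1⟩ := List.getElem?_eq_some_iff.1 h1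
    obtain ⟨hs2, e2⟩ := List.getElem?_eq_some_iff.1 h2
    refine ⟨l.take s, (l.drop (s + 1)).take (2 * k - 1), l.drop (s + 2 * k + 1), ?_, ?_, ?_, ?_⟩
    · have d2 : (l.drop (s + 1)).drop (2 * k - 1) = v :: l.drop (s + 2 * k + 1) := by
        rw [List.drop_drop, show s + 1 + (2 * k - 1) = s + 2 * k by omega,
          List.drop_eq_getElem_cons hs2, e2]
      have d1 : l.drop s = v :: l.drop (s + 1) := by
        rw [List.drop_eq_getElem_cons hs1, e1]
      conv_lhs => rw [← List.take_append_drop s l, d1,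
        ← List.take_append_drop (2 * k - 1) (l.drop (s + 1)), d2]
      simp
    · simp; omega
    · simp; omega
    · intro hv
      obtain ⟨t, ht⟩ := List.mem_iff_getElem?.1 hv
      rw [List.getElem?_take] at ht
      split_ifs at ht with hlt
      rw [List.getElem?_drop] at ht
      exact h3 (t + 1) (by omega) (by omega) (by rw [← ht]; congr 1; omega)

lemma segCount_eq (v : Amalg i j) {k : ℕ} (hk : 1 ≤ k) (l : List (Amalg i j)) :
    segCount i j v k l = ((Finset.range (l.length + 1)).filter (SegAt v k l)).card := by
  unfold segCount
  congr 1
  exact Finset.filter_congr fun s _ => segAt_iff v hk l s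

/-- Segment counts only depend on the length of the word and on the positions of `v`. -/
lemma segCount_congr (v : Amalg i j) {k : ℕ} (hk : 1 ≤ k) {l L : List (Amalg i j)}
    (h : List.Forall₂ (fun x y => x = v ↔ y = v) l L) :
    segCount i j v k l = segCount i j v k L := by
  have hlen := h.length_eq
  have hget : ∀ t : ℕ, l[t]? = some v ↔ L[t]? = some v := by
    intro t
    rw [List.forall₂_iff_get] at h
    simp only [List.getElem?_eq_some_iff]
    constructor
    · rintro ⟨ht, e⟩
      exact ⟨hlen ▸ ht, (h.2 t ht (hlen ▸ ht)).1 e⟩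
    · rintro ⟨ht, e⟩
      exact ⟨hlen ▸ ht, (h.2 t (hlen ▸ ht) ht).2 e⟩
  rw [segCount_eq i j v hk, segCount_eq i j v hk, hlen]
  congr 1
  refine Finset.filter_congr fun s _ => ?_
  simp only [SegAt, hget, ne_eq]

/-! ### The word representing `gₙ` -/

/-- The triangular number `m(m+1)/2`. -/
def tri (m : ℕ) : ℕ := ∑ t ∈ Finset.range m, (t + 1)

lemma tri_succ (m : ℕ) : tri (m + 1) = tri m + (m + 1) := by
  simp [tri, Finset.sum_range_succ]

lemma tri_strictMono : StrictMono tri :=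
  strictMono_nat_of_lt_succ fun m => by rw [tri_succ]; omega

/-- Consecutive triangular numbers `q < q + k` are the `(k-1)`-st and the `k`-th one. -/
lemma tri_consecutive {q k : ℕ} (hk : 1 ≤ k) (h1 : q ∈ Set.range tri)
    (h2 : q + k ∈ Set.range tri) (h3 : ∀ t, 0 < t → t < k → q + t ∉ Set.range tri) :
    q = tri (k - 1) := by
  obtain ⟨m, rfl⟩ := h1
  obtain ⟨m', hm'⟩ := h2
  have hlt : m < m' := tri_strictMono.lt_iff_lt.1 (by omega)
  have hs := tri_succ m
  rcases Nat.lt_or_ge (m + 1) k with h | h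
  · exact absurd ⟨m + 1, hs⟩ (h3 (m + 1) (by omega) h)
  · have := tri_strictMono.monotone (show m + 1 ≤ m' from hlt)
    have : k = m + 1 := by omega
    subst this
    rfl

lemma not_tri_between {m t : ℕ} (h0 : 0 < t) (ht : t < m + 1) : tri m + t ∉ Set.range tri := by
  rintro ⟨m', h⟩
  have h1 : m < m' := tri_strictMono.lt_iff_lt.1 (by omega)
  have := tri_strictMono.monotone (show m + 1 ≤ m' from h1)
  rw [tri_succ] at this
  omega

/-- `0` and `1` are the only two triangular numbers at distance one. -/
lemma not_tri_succ {q : ℕ} (h0 : 0 < q) (h1 : q ∈ Set.range tri) : q + 1 ∉ Set.range tri := by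
  intro h2
  have := tri_consecutive le_rfl h1 h2 (by intros; omega)
  simp [tri] at this
  omega

section word

variable {G : Type*} [Group G] (x y : G)

/-- The letters of `gₙ`: `y` at even positions, and `x` or `x⁻¹` at position `2q+1` according to
whether `q` is triangular. -/
noncomputable def letter (t : ℕ) : G :=
  if t % 2 = 0 then y else if t / 2 ∈ Set.range tri then x else x⁻¹

/-- The word formed by the first `2N` letters. -/
noncomputable def word (N : ℕ) : List G := (List.range (2 * N)).map (letter x y)

lemma letter_even (q : ℕ) : letter x y (2 * q) = y := by simp [letter]

lemma letter_odd (q : ℕ) :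
    letter x y (2 * q + 1) = if q ∈ Set.range tri then x else x⁻¹ := by
  have h : (2 * q + 1) / 2 = q := by omega
  have h' : (2 * q + 1) % 2 ≠ 0 := by omega
  rw [letter, if_neg h', h]

lemma word_succ_prod (N : ℕ) : (word x y (N + 1)).prod =
    (word x y N).prod * (y * if N ∈ Set.range tri then x else x⁻¹) := by
  rw [word, show 2 * (N + 1) = 2 * N + 1 + 1 by ring, List.range_succ, List.range_succ]
  simp only [List.map_append, List.prod_append, List.map_cons, List.map_nil, List.prod_singleton,
    letter_even, letter_odd, word, mul_assoc]

lemma word_block_prod (m s : ℕ) (hs : s ≤ m) : (word x y (tri m + 1 + s)).prod =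
    (word x y (tri m)).prod * ((y * x) * (y * x⁻¹) ^ s) := by
  induction s with
  | zero => rw [add_zero, word_succ_prod, if_pos ⟨m, rfl⟩, pow_zero, mul_one]
  | succ s ih =>
    rw [← add_assoc, word_succ_prod, ih (by omega), if_neg, pow_succ]
    · simp only [mul_assoc]
    · rw [add_assoc]; exact not_tri_between (by omega) (by omega)

lemma word_tri_prod (m : ℕ) : (word x y (tri m)).prod =
    ((List.range m).map fun idx => (y * x) * (y * x⁻¹) ^ idx).prod := by
  induction m with
  | zero => simp [word, tri]
  | succ m ih =>
    rw [List.range_succ, List.map_append, List.prod_append, ← ih, List.map_singleton,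
      List.prod_singleton, ← word_block_prod x y m m le_rfl, tri_succ]
    congr 2
    ring

/-- The element `gₙ` is represented by the word of length `2 (tri (n+1) + 1)`. -/
lemma word_prod (n : ℕ) : (word x y (tri (n + 1) + 1)).prod =
    ((List.range (n + 1)).map fun idx => (y * x) * (y * x⁻¹) ^ idx).prod * (y * x) := by
  rw [word_succ_prod, if_pos ⟨n + 1, rfl⟩, word_tri_prod]

lemma word_getElem? (N t : ℕ) (v : G) :
    (word x y N)[t]? = some v ↔ t < 2 * N ∧ letter x y t = v := by
  simp [word, List.getElem?_eq_some_iff]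

lemma letter_eq_iff (h1 : y ≠ x) (h3 : x ≠ x⁻¹) (t : ℕ) :
    letter x y t = x ↔ ∃ q, t = 2 * q + 1 ∧ q ∈ Set.range tri := by
  rcases Nat.even_or_odd' t with ⟨q, rfl | rfl⟩
  · rw [letter_even]
    simp only [h1, false_iff, not_exists, not_and]
    intro r hr; omega
  · rw [letter_odd]
    constructor
    · intro h
      refine ⟨q, rfl, ?_⟩
      by_contra hq
      rw [if_neg hq] at h
      exact h3 h.symm
    · rintro ⟨r, hr, hq⟩
      obtain rfl : q = r := by omega
      rw [if_pos hq]

lemma letter_eq_inv_iff (h2 : y ≠ x⁻¹) (h3 : x ≠ x⁻¹) (t : ℕ) :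
    letter x y t = x⁻¹ ↔ ∃ q, t = 2 * q + 1 ∧ q ∉ Set.range tri := by
  rcases Nat.even_or_odd' t with ⟨q, rfl | rfl⟩
  · rw [letter_even]
    simp only [h2, false_iff, not_exists, not_and]
    intro r hr; omega
  · rw [letter_odd]
    constructor
    · intro h
      refine ⟨q, rfl, ?_⟩
      intro hq
      rw [if_pos hq] at h
      exact h3 h
    · rintro ⟨r, hr, hq⟩
      obtain rfl : q = r := by omega
      rw [if_neg hq]

/-- For `k ≤ n+1` the word for `gₙ` has exactly one `x`-segment of length `2k-1`: the one that
joins the heads of the blocks `k-1` and `k`. -/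
lemma segAt_word_iff (h1 : y ≠ x) (h3 : x ≠ x⁻¹) {n k : ℕ} (hk : 1 ≤ k)
    (hkn : k ≤ n + 1) (s : ℕ) :
    SegAt x k (word x y (tri (n + 1) + 1)) s ↔ s = 2 * tri (k - 1) + 1 := by
  simp only [SegAt, word_getElem?, letter_eq_iff x y h1 h3, ne_eq]
  constructor
  · rintro ⟨⟨hs, q, rfl, hq⟩, ⟨hs2, r, hr, hr'⟩, h⟩
    obtain rfl : r = q + k := by omega
    rw [← tri_consecutive hk hq hr']
    intro t h0 ht hqt
    exact h (2 * t) (by omega) (by omega) ⟨by omega, q + t, by omega, hqt⟩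
  · rintro rfl
    obtain ⟨m, rfl⟩ : ∃ m, k = m + 1 := ⟨k - 1, by omega⟩
    have hle := tri_strictMono.monotone hkn
    have hs := tri_succ m
    simp only [Nat.add_sub_cancel]
    refine ⟨⟨by omega, _, rfl, m, rfl⟩, ⟨by omega, tri (m + 1), by omega, m + 1, rfl⟩, ?_⟩
    rintro t h0 ht ⟨-, q, hq, hq'⟩
    obtain ⟨r, rfl⟩ : ∃ r, t = 2 * r := ⟨q - tri m, by omega⟩
    obtain rfl : q = tri m + r := by omega
    exact not_tri_between (by omega) (by omega) hq'

/-- An `x⁻¹`-segment of length at least `5` would enclose `x y x`, which occurs only at the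
positions `1, 2, 3` of the word. -/
lemma not_segAt_word_inv (h2 : y ≠ x⁻¹) (h3 : x ≠ x⁻¹) {N k : ℕ} (hk : 3 ≤ k) (s : ℕ) :
    ¬ SegAt x⁻¹ k (word x y N) s := by
  simp only [SegAt, word_getElem?, letter_eq_inv_iff x y h2 h3, ne_eq]
  rintro ⟨⟨hs, q, rfl, hq⟩, ⟨hs2, r, hr, hr'⟩, h⟩
  have key : ∀ t, 0 < t → t < k → q + t ∈ Set.range tri := by
    intro t h0 ht
    by_contra hc
    exact h (2 * t) (by omega) (by omega) ⟨by omega, q + t, by omega, hc⟩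
  exact not_tri_succ (by omega) (key 1 (by omega) (by omega)) (key 2 (by omega) (by omega))

end word

/-! ### Double cosets and special forms -/

lemma DCoset_self (v : Amalg i j) : v ∈ DCoset i j v :=
  ⟨1, CG_one i j, 1, CG_one i j, by simp⟩

lemma DCoset_symm {v w : Amalg i j} (h : v ∈ DCoset i j w) : w ∈ DCoset i j v := by
  obtain ⟨c, hc, d, hd, rfl⟩ := h
  exact ⟨c⁻¹, CG_inv i j hc, d⁻¹, CG_inv i j hd, by group⟩

lemma DCoset_trans {u v w : Amalg i j} (h : u ∈ DCoset i j v) (h' : v ∈ DCoset i j w) :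
    u ∈ DCoset i j w := by
  obtain ⟨c, hc, d, hd, rfl⟩ := h
  obtain ⟨c', hc', d', hd', rfl⟩ := h'
  exact ⟨c * c', CG_mul i j hc hc', d' * d, CG_mul i j hd' hd, by group⟩

lemma DCoset_eq {v w : Amalg i j} (h : v ∈ DCoset i j w) : DCoset i j v = DCoset i j w :=
  Set.ext fun _ => ⟨fun hx => DCoset_trans i j hx h,
    fun hx => DCoset_trans i j hx (DCoset_symm i j h)⟩

lemma DCoset_sub_AG {v w : Amalg i j} (hw : w ∈ AG i j) (h : v ∈ DCoset i j w) :
    v ∈ AG i j := by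
  obtain ⟨c, hc, d, hd, rfl⟩ := h
  exact AG_mul i j (AG_mul i j (CG_sub_AG i j hc) hw) (CG_sub_AG i j hd)

/-- If `v` is the only syllable of `C v C` in two words whose syllables agree up to double
cosets, then `v` occupies the same positions in both. -/
lemma forall₂_eq_iff {l L : List (Amalg i j)} {v : Amalg i j}
    (h : List.Forall₂ (fun x y => x ∈ DCoset i j y) l L)
    (hl : ∀ x ∈ l, x ∈ DCoset i j v → x = v) (hL : ∀ x ∈ L, x ∈ DCoset i j v → x = v) :
    List.Forall₂ (fun x y => x = v ↔ y = v) l L := by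
  induction h with
  | nil => exact List.Forall₂.nil
  | cons hxy _ ih =>
    refine List.Forall₂.cons ⟨?_, ?_⟩ (ih (fun x hx => hl x (List.mem_cons_of_mem _ hx))
      (fun x hx => hL x (List.mem_cons_of_mem _ hx)))
    · rintro rfl
      exact hL _ (by simp) (DCoset_symm i j hxy)
    · rintro rfl
      exact hl _ (by simp) hxy

/-- A special sequence whose product is not in `C` is an alternating word. The only
special sequences that are not alternating words consist of one syllable, lying in `C`. -/
lemma IsSpecialSeq.alt {a : A} {l : List (Amalg i j)} (h : IsSpecialSeq i j a l)
    (hC : l.prod ∉ CG i j) : Alt i j l := by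
  obtain ⟨h1, h2, h3, -⟩ := h
  refine ⟨fun x hx => ⟨h1 x hx, ?_⟩, ?_⟩
  · rcases Nat.lt_or_ge 1 l.length with hlen | hlen
    · exact h3 hlen x hx
    · obtain ⟨z, rfl⟩ : ∃ z, l = [z] :=
        List.length_eq_one_iff.1 (le_antisymm hlen (List.length_pos_of_mem hx))
      obtain rfl : x = z := by simpa using hx
      simpa using hC
  · have h2' : l.IsChain _ := h2
    refine List.IsChain.imp_of_mem_imp ?_ h2'
    rintro x y hx hy ⟨hA, hB⟩ hiff
    by_cases hxA : x ∈ AG i j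
    · exact hA ⟨hxA, hiff.1 hxA⟩
    · exact hB ⟨(h1 x hx).resolve_left hxA, (h1 y hy).resolve_left (by tauto)⟩

section main

variable {i j} {a : A} {b : B}

lemma ofA_not_mem_CG (hcoset : DCoset i j (ofA i j a) ≠ DCoset i j ((ofA i j a)⁻¹)) :
    ofA i j a ∉ CG i j := by
  intro h
  refine hcoset (DCoset_eq i j ⟨ofA i j a * ofA i j a, CG_mul i j h h, 1, CG_one i j, by group⟩)

lemma ofB_not_mem_CG (hi : Function.Injective i) (hj : Function.Injective j)
    (hb : b ∉ j.range) : ofB i j b ∉ CG i j :=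
  fun h => hb (mem_range_of_ofB i j hi hj (toPush_C i j h))

lemma ofB_not_mem_AG (hi : Function.Injective i) (hj : Function.Injective j)
    (hb : b ∉ j.range) : ofB i j b ∉ AG i j :=
  fun h => ofB_not_mem_CG hi hj hb (mem_CG_of_mem i j hi hj h ⟨b, rfl⟩)

lemma letter_cases {G : Type*} [Group G] (x y : G) (t : ℕ) :
    (t % 2 = 0 ∧ letter x y t = y) ∨ (t % 2 = 1 ∧ (letter x y t = x ∨ letter x y t = x⁻¹)) := by
  unfold letter
  split_ifs <;> simp <;> omega

lemma ofA_mem_AG : ofA i j a ∈ AG i j := ⟨a, rfl⟩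

lemma letter_spec (hi : Function.Injective i) (hj : Function.Injective j)
    (hcoset : DCoset i j (ofA i j a) ≠ DCoset i j ((ofA i j a)⁻¹)) (hb : b ∉ j.range) (t : ℕ) :
    letter (ofA i j a) (ofB i j b) t ∉ CG i j ∧
    (letter (ofA i j a) (ofB i j b) t ∈ AG i j ↔ t % 2 = 1) ∧
    (letter (ofA i j a) (ofB i j b) t ∈ BG i j ↔ t % 2 = 0) := by
  have hA := ofA_not_mem_CG hcoset
  have hB := ofB_not_mem_CG hi hj hb
  have hAG : ofA i j a ∈ AG i j := ofA_mem_AG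
  rcases letter_cases (ofA i j a) (ofB i j b) t with ⟨ht, h⟩ | ⟨ht, h | h⟩ <;> rw [h]
  · exact ⟨hB, by simp [ofB_not_mem_AG hi hj hb, ht], by simp [ht, BG]⟩
  · exact ⟨hA, by simp [hAG, ht], by
      simp only [ht, one_ne_zero, iff_false]
      exact fun h => hA (mem_CG_of_mem i j hi hj hAG h)⟩
  · rw [CG_inv_iff, AG_inv_iff, BG_inv_iff]
    exact ⟨hA, by simp [hAG, ht], by
      simp only [ht, one_ne_zero, iff_false]
      exact fun h => hA (mem_CG_of_mem i j hi hj hAG h)⟩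

lemma word_special (hi : Function.Injective i) (hj : Function.Injective j)
    (hcoset : DCoset i j (ofA i j a) ≠ DCoset i j ((ofA i j a)⁻¹)) (hb : b ∉ j.range) (N : ℕ) :
    IsSpecialSeq i j a (word (ofA i j a) (ofB i j b) N) := by
  have hs := letter_spec hi hj hcoset hb
  have hAG : ofA i j a ∈ AG i j := ofA_mem_AG
  have hBn := ofB_not_mem_AG hi hj hb
  have hmem : ∀ x ∈ word (ofA i j a) (ofB i j b) N,
      ∃ t, letter (ofA i j a) (ofB i j b) t = x := by
    intro x hx
    obtain ⟨t, -, ht⟩ := List.mem_map.1 hx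
    exact ⟨t, ht⟩
  refine ⟨?_, ?_, ?_, ?_, ?_⟩
  · intro x hx
    obtain ⟨t, rfl⟩ := hmem x hx
    rw [Set.mem_union, (hs t).2.1, (hs t).2.2]
    omega
  · change List.IsChain _ _
    rw [List.isChain_iff_getElem]
    intro t ht
    simp only [word, List.getElem_map, List.getElem_range]
    rw [(hs t).2.1, (hs t).2.2, (hs (t + 1)).2.1, (hs (t + 1)).2.2]
    omega
  · intro _ x hx
    obtain ⟨t, rfl⟩ := hmem x hx
    exact (hs t).1
  · intro x hx hd
    obtain ⟨t, rfl⟩ := hmem x hx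
    rcases letter_cases (ofA i j a) (ofB i j b) t with ⟨ht, h⟩ | ⟨ht, h | h⟩
    · exact absurd (DCoset_sub_AG i j hAG (h ▸ hd)) hBn
    · exact h
    · rw [h] at hd
      exact absurd (DCoset_eq i j hd).symm hcoset
  · intro x hx hd
    obtain ⟨t, rfl⟩ := hmem x hx
    rcases letter_cases (ofA i j a) (ofB i j b) t with ⟨ht, h⟩ | ⟨ht, h | h⟩
    · exact absurd (DCoset_sub_AG i j ((AG_inv_iff i j).2 hAG) (h ▸ hd)) hBn
    · rw [h] at hd
      exact absurd (DCoset_eq i j hd) hcoset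
    · exact h

lemma word_alt (hi : Function.Injective i) (hj : Function.Injective j)
    (hcoset : DCoset i j (ofA i j a) ≠ DCoset i j ((ofA i j a)⁻¹)) (hb : b ∉ j.range) (N : ℕ) :
    Alt i j (word (ofA i j a) (ofB i j b) N) := by
  have hs := letter_spec hi hj hcoset hb
  refine ⟨fun x hx => ⟨(word_special hi hj hcoset hb N).1 x hx, ?_⟩, ?_⟩
  · obtain ⟨t, -, rfl⟩ := List.mem_map.1 hx
    exact (hs t).1
  · rw [List.isChain_iff_getElem]
    intro t ht
    simp only [word, List.getElem_map, List.getElem_range]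
    rw [(hs t).2.1, (hs (t + 1)).2.1]
    omega

/-- The chosen special form of the element represented by `word` agrees with `word` syllable by
syllable up to double cosets, and it is itself special. -/
lemma spform_word (hi : Function.Injective i) (hj : Function.Injective j)
    (hcoset : DCoset i j (ofA i j a) ≠ DCoset i j ((ofA i j a)⁻¹)) (hb : b ∉ j.range)
    {N : ℕ} (hN : 0 < N) {g : Amalg i j} (hg : (word (ofA i j a) (ofB i j b) N).prod = g) :
    IsSpecialSeq i j a (spform i j a g) ∧
      List.Forall₂ (fun x y => x ∈ DCoset i j y) (spform i j a g)
        (word (ofA i j a) (ofB i j b) N) := by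
  have hex : ∃ l, IsSpecialForm i j a g l :=
    ⟨_, word_special hi hj hcoset hb N, 1, CG_one i j, 1, CG_one i j, by simpa using hg⟩
  have hsp : IsSpecialForm i j a g (spform i j a g) := by
    rw [spform, dif_pos hex]
    exact Classical.choose_spec hex
  obtain ⟨h1, u, hu, u', hu', h2⟩ := hsp
  refine ⟨h1, ?_⟩
  have hw := word_alt hi hj hcoset hb N
  refine Alt.forall₂ i j hi hj (h1.alt i j ?_) hw hu hu' (h2.trans hg.symm)
  intro hc
  have := hw.eq_nil i j hi hj (by
    rw [hg, ← h2]; exact CG_mul i j (CG_mul i j hu hc) hu')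
  have hlen := congrArg List.length this
  simp [word] at hlen
  omega

end main

/-- **`Δ` is unbounded on the amalgamated free product.**  Let `a ∈ A` be nontrivial with
`C a C ≠ C a⁻¹ C` and let `b ∈ B \ C`.  For `n ≥ 1`, the element
`gₙ = (ba)(ba⁻¹)⁰ ⋅ (ba)(ba⁻¹)¹ ⋅ ⋯ ⋅ (ba)(ba⁻¹)ⁿ ⋅ (ba)`
(the product over `i = 0, 1, …, n` in order of the blocks `(ba)(ba⁻¹)^i`, followed by a final
`(ba)`) satisfies `Δ(gₙ) ≥ n - 1`; in particular `Δ` is unbounded on `G`. -/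
theorem amalgam_delta_unbounded
    (hi : Function.Injective i) (hj : Function.Injective j)
    (a : A) (ha : a ≠ 1)
    (hcoset : DCoset i j (ofA i j a) ≠ DCoset i j ((ofA i j a)⁻¹))
    (b : B) (hb : b ∉ j.range)
    (n : ℕ) (hn : 1 ≤ n) :
    (n : ℝ) - 1 ≤ Delta i j a
      (((List.range (n + 1)).map fun idx =>
          (ofB i j b * ofA i j a) * (ofB i j b * (ofA i j a)⁻¹) ^ idx).prod *
        (ofB i j b * ofA i j a)) := by
  set g : Amalg i j := (((List.range (n + 1)).map fun idx =>
          (ofB i j b * ofA i j a) * (ofB i j b * (ofA i j a)⁻¹) ^ idx).prod *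
        (ofB i j b * ofA i j a)) with hgdef
  obtain ⟨hspec, hfor⟩ := spform_word hi hj hcoset hb (Nat.succ_pos (tri (n + 1)))
    (word_prod (ofA i j a) (ofB i j b) n)
  rw [← hgdef] at hspec hfor
  have hwspec := word_special hi hj hcoset hb (tri (n + 1) + 1)
  have hBn := ofB_not_mem_AG hi hj hb
  have hAG : ofA i j a ∈ AG i j := ofA_mem_AG
  have h1 : ofB i j b ≠ ofA i j a := fun h => hBn (h ▸ hAG)
  have h2 : ofB i j b ≠ (ofA i j a)⁻¹ := fun h => hBn (h ▸ (AG_inv_iff i j).2 hAG)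
  have h3 : ofA i j a ≠ (ofA i j a)⁻¹ := fun h => hcoset (congrArg _ h)
  have hlen : (spform i j a g).length = 2 * (tri (n + 1) + 1) := by
    rw [hfor.length_eq]; simp [word]
  have htri : ∀ m, m ≤ tri m := fun m => tri_strictMono.le_apply
  have hp : ∀ k, 1 ≤ k → k ≤ n + 1 → pk i j a k g = 1 := by
    intro k hk hkn
    rw [pk, segCount_congr i j _ hk (forall₂_eq_iff i j hfor hspec.2.2.2.1 hwspec.2.2.2.1),
      segCount_eq i j _ hk, Finset.card_eq_one]
    refine ⟨2 * tri (k - 1) + 1, ?_⟩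
    have hlt : tri (k - 1) < tri (n + 1) := tri_strictMono (by omega)
    ext s
    simp only [Finset.mem_filter, Finset.mem_range, Finset.mem_singleton,
      segAt_word_iff _ _ h1 h3 hk hkn]
    refine ⟨fun h => h.2, fun h => ⟨?_, h⟩⟩
    simp only [word, List.length_map, List.length_range]
    omega
  have hm : ∀ k, 3 ≤ k → mk i j a k g = 0 := by
    intro k hk
    rw [mk, segCount_congr i j _ (by omega)
      (forall₂_eq_iff i j hfor hspec.2.2.2.2 hwspec.2.2.2.2),
      segCount_eq i j _ (by omega), Finset.card_eq_zero, Finset.filter_eq_empty_iff]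
    exact fun s _ => not_segAt_word_inv _ _ h2 h3 hk s
  have hr : ∀ k ∈ Finset.Icc 3 (n + 1), (rk i j a k g : ℝ) = 1 := by
    intro k hk
    rw [Finset.mem_Icc] at hk
    rw [rk, dk, hp k (by omega) hk.2, hm k hk.1]
    norm_num
  calc (n : ℝ) - 1 = ∑ k ∈ Finset.Icc 3 (n + 1), (rk i j a k g : ℝ) := by
        rw [Finset.sum_congr rfl hr]
        obtain ⟨m, rfl⟩ : ∃ m, n = m + 1 := ⟨n - 1, by omega⟩
        simp
    _ ≤ Delta i j a g := by
        refine Finset.sum_le_sum_of_subset_of_nonneg ?_ ?_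
        · refine Finset.Icc_subset_Icc (by norm_num) ?_
          have := htri (n + 1)
          omega
        · intro k _ _
          exact_mod_cast Int.emod_nonneg _ (by norm_num)

end PalAmalg
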